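/- arXiv:0909.5199 — 2 statements merged into one kernel-verified Lean document; each statement's English description precedes it below -/
import Mathlib

section
/- For every m ≥ 0, the number of cycle-up-down permutations of [m] all of whose cycles have odd length equals E_m, the number of up-down permutations of [m]. -/
open Equiv Finset

/-- `π` is an up-down permutation of `[n]` in one-line notation (0-indexed):
`π 0 < π 1 > π 2 < π 3 > ⋯`. -/
def IsUpDownPerm {n : ℕ} (π : Equiv.Perm (Fin n)) : Prop :=
  ∀ i j : Fin n, (j : ℕ) = (i : ℕ) + 1 →
    (((i : ℕ) % 2 = 0 → π i < π j) ∧ ((i : ℕ) % 2 = 1 → π j < π i))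

/-- The Euler number `E n`: the number of up-down permutations of `[n]`. -/
noncomputable def eulerE (n : ℕ) : ℕ :=
  Nat.card {π : Equiv.Perm (Fin n) // IsUpDownPerm π}

/-- The length of the cycle of `π` containing `x` (fixed points give length `1`). -/
noncomputable def cycLen {n : ℕ} (π : Equiv.Perm (Fin n)) (x : Fin n) : ℕ :=
  Function.minimalPeriod (⇑π) x

/-- `x` is the smallest element of its cycle of `π`. -/
def IsOrbitMin {n : ℕ} (π : Equiv.Perm (Fin n)) (x : Fin n) : Prop :=
  ∀ k : ℕ, x ≤ (π ^ k) x

/-- The cyclic representation `x, π x, π² x, …` (of length `cycLen π x`) of the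
cycle of `π` containing `x` has the up-down pattern `x < π x > π² x < ⋯`. -/
def CycleUpDownAt {n : ℕ} (π : Equiv.Perm (Fin n)) (x : Fin n) : Prop :=
  ∀ i : ℕ, i + 1 < cycLen π x →
    ((i % 2 = 0 → (π ^ i) x < (π ^ (i + 1)) x) ∧
     (i % 2 = 1 → (π ^ (i + 1)) x < (π ^ i) x))

/-- `π` is cycle-up-down: every cycle, written in standard form
(starting at its smallest element), is up-down. -/
def IsCUD {n : ℕ} (π : Equiv.Perm (Fin n)) : Prop :=
  ∀ x : Fin n, IsOrbitMin π x → CycleUpDownAt π x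

/-- The number of cycles of `π` (fixed points included), counted via the
smallest elements of the cycles. -/
noncomputable def cycleCount {n : ℕ} (π : Equiv.Perm (Fin n)) : ℕ :=
  Nat.card {x : Fin n // IsOrbitMin π x}

/-- The number of cycles of `π` of even length. -/
noncomputable def evenCycleCount {n : ℕ} (π : Equiv.Perm (Fin n)) : ℕ :=
  Nat.card {x : Fin n // IsOrbitMin π x ∧ Even (cycLen π x)}

/-- The number of cycles of `π` of odd length. -/
noncomputable def oddCycleCount {n : ℕ} (π : Equiv.Perm (Fin n)) : ℕ :=
  Nat.card {x : Fin n // IsOrbitMin π x ∧ Odd (cycLen π x)}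

/-- The number of excedances of `π`. -/
noncomputable def excCount {n : ℕ} (π : Equiv.Perm (Fin n)) : ℕ :=
  Nat.card {i : Fin n // i < π i}

/-- The number of left-to-right minima of `π` (in one-line notation). -/
noncomputable def lrmCount {n : ℕ} (π : Equiv.Perm (Fin n)) : ℕ :=
  Nat.card {i : Fin n // ∀ j : Fin n, j < i → π i < π j}

/-- The number of extreme elements of `π`: entries in position `≥ 2`
(0-indexed: position `≥ 1`) that are left-to-right minima or maxima. -/
noncomputable def extrCount {n : ℕ} (π : Equiv.Perm (Fin n)) : ℕ :=
  Nat.card {i : Fin n // (i : ℕ) ≠ 0 ∧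
    ((∀ j : Fin n, j < i → π i < π j) ∨ (∀ j : Fin n, j < i → π j < π i))}

/-- Auxiliary (fuel-based) computation of the length of the `s`-driven
min/max subsequence of a list: at step `j` (0-indexed) pick the minimum of the
remaining list if `s j = true`, its maximum if `s j = false`, and continue with
the part of the list strictly to the right of the picked entry. -/
def msLenAux : ℕ → (ℕ → Bool) → List ℕ → ℕ
  | 0, _, _ => 0
  | _, _, [] => 0
  | fuel + 1, s, a :: t =>
      let l := a :: t
      let v := if s 0 then l.foldr min a else l.foldr max a
      1 + msLenAux fuel (fun i => s (i + 1)) ((l.dropWhile (· != v)).tail)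

/-- The length of the `s`-driven min/max subsequence of a list
(`s j = true` means minimum at step `j`, `s j = false` means maximum). -/
def msLen (s : ℕ → Bool) (l : List ℕ) : ℕ := msLenAux l.length s l

/-- The one-line notation of `π` as a list of natural numbers. -/
def oneLine {n : ℕ} (π : Equiv.Perm (Fin n)) : List ℕ :=
  List.ofFn fun i => ((π i : ℕ))

/-- The statistic `m_s(π)`: the length of the `s`-driven min/max subsequence
of the one-line notation of `π`. -/
def msStat {n : ℕ} (s : ℕ → Bool) (π : Equiv.Perm (Fin n)) : ℕ :=
  msLen s (oneLine π)

/-- `st π`: the length of the min-max sequence of `π` (alternately take the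
minimum, the maximum, the minimum, … of what remains to the right). -/
def stStat {n : ℕ} (π : Equiv.Perm (Fin n)) : ℕ :=
  msStat (fun i => i % 2 == 0) π

/-- `π` is a cyclic permutation: it consists of a single cycle. -/
def IsCyclicPerm {n : ℕ} (π : Equiv.Perm (Fin n)) : Prop :=
  ∀ x y : Fin n, π.SameCycle x y

/-- The number of up-down cycles of `π` having length `k`. -/
noncomputable def udLenCount {n : ℕ} (π : Equiv.Perm (Fin n)) (k : ℕ) : ℕ :=
  Nat.card {x : Fin n // IsOrbitMin π x ∧ cycLen π x = k ∧ CycleUpDownAt π x}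

/-- `ud π`: the number of up-down cycles of `π`. -/
noncomputable def udCount {n : ℕ} (π : Equiv.Perm (Fin n)) : ℕ :=
  Nat.card {x : Fin n // IsOrbitMin π x ∧ CycleUpDownAt π x}

/-- `r n`: the number of permutations of `[n]` having no up-down cycles. -/
noncomputable def noUDCyclesCount (n : ℕ) : ℕ :=
  Nat.card {π : Equiv.Perm (Fin n) // ∀ x : Fin n, IsOrbitMin π x → ¬ CycleUpDownAt π x}

/-!
Both sides satisfy the same recursion on the underlying finite set of values, obtained by splitting
at its least element `a`. An up-down word is `L.reverse ++ a :: R`, where `L` is a down-up word of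
even length and `R` is a down-up word on the remaining values; reversing the order of those values
turns `R` into an up-down word. A cycle-up-down permutation with odd cycles is the cycle
`(a, L₁, L₂, …)` times such a permutation of the remaining values, and that cycle is up-down of odd
length exactly when `L` is a down-up word of even length.
-/

/-- A word alternates with respect to `r` if `r w₀ w₁`, `r w₂ w₁`, `r w₂ w₃`, …; this is an up-down
word for `r = (· < ·)` and a down-up word for `r = (· > ·)`. -/
def IsAlternating {α : Type*} (r : α → α → Prop) (w : List α) : Prop :=
  ∀ (i : ℕ) (h : i + 1 < w.length),
    (i % 2 = 0 → r w[i] w[i + 1]) ∧ (i % 2 = 1 → r w[i + 1] w[i])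

namespace IsAlternating

variable {α : Type*} {r : α → α → Prop} {a : α} {L R : List α}

theorem reverse_of_even (hL : IsAlternating r L) (heven : Even L.length) :
    IsAlternating (flip r) L.reverse := by
  intro i hi
  rw [List.length_reverse] at hi
  have hpair := hL (L.length - 2 - i) (by omega)
  have hsucc : L.length - 2 - i + 1 = L.length - 1 - i := by omega
  have hpred : L.length - 1 - (i + 1) = L.length - 2 - i := by omega
  rw [Nat.even_iff] at heven
  simp only [hsucc] at hpair
  simp only [List.getElem_reverse, hpred]
  exact ⟨fun h ↦ hpair.1 (by omega), fun h ↦ hpair.2 (by omega)⟩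

theorem cons_iff (hR : ∀ x ∈ R, r a x) : IsAlternating r (a :: R) ↔ IsAlternating (flip r) R := by
  constructor
  · intro h i hi
    have hpair := h (i + 1) (by simpa using hi)
    exact ⟨fun hi ↦ hpair.2 (by omega), fun hi ↦ hpair.1 (by omega)⟩
  · rintro h (_ | i) hi
    · exact ⟨fun _ ↦ hR _ (List.getElem_mem _), by simp⟩
    · have hpair := h i (by simpa using hi)
      exact ⟨fun hi ↦ hpair.2 (by omega), fun hi ↦ hpair.1 (by omega)⟩

theorem append_cons_iff_of_even (hL : ∀ x ∈ L, r a x) (heven : Even L.length) :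
    IsAlternating r (L ++ a :: R) ↔ IsAlternating r L ∧ IsAlternating r (a :: R) := by
  rw [Nat.even_iff] at heven
  constructor
  · refine fun h ↦ ⟨fun i hi ↦ ?_, fun i hi ↦ ?_⟩
    · have := h i (by grind)
      grind
    · have := h (L.length + i) (by grind)
      grind
  · rintro ⟨h₁, h₂⟩ i hi
    rcases lt_trichotomy (i + 1) L.length with hlt | heq | hgt
    · have := h₁ i hlt
      grind
    · grind
    · have := h₂ (i - L.length) (by grind)
      grind

theorem even_of_append_cons [Std.Asymm r] (hL : ∀ x ∈ L, r a x)
    (h : IsAlternating r (L ++ a :: R)) : Even L.length := by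
  by_contra hodd
  rw [Nat.not_even_iff] at hodd
  have hlast : r (L[L.length - 1]'(by omega)) a := by
    have := (h (L.length - 1) (by grind)).1 (by omega)
    grind
  exact Std.Asymm.asymm _ _ hlast (hL _ (List.getElem_mem _))

theorem append_cons_iff [Std.Asymm r] (hL : ∀ x ∈ L, r a x) (hR : ∀ x ∈ R, r a x) :
    IsAlternating r (L ++ a :: R) ↔
      IsAlternating r L ∧ Even L.length ∧ IsAlternating (flip r) R := by
  constructor
  · intro h
    have heven := h.even_of_append_cons hL
    rw [append_cons_iff_of_even hL heven, cons_iff hR] at h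
    exact ⟨h.1, heven, h.2⟩
  · rintro ⟨hAltL, heven, hAltR⟩
    exact (append_cons_iff_of_even hL heven).2 ⟨hAltL, (cons_iff hR).2 hAltR⟩

theorem map_iff_of_strictAntiOn {β : Type*} [LinearOrder α] [Preorder β] {f : α → β} {s : Set α}
    (hf : StrictAntiOn f s) (hL : ∀ x ∈ L, x ∈ s) :
    IsAlternating (· > ·) (L.map f) ↔ IsAlternating (· < ·) L := by
  have hlt {i j : ℕ} (hi : i < L.length) (hj : j < L.length) : f L[i] < f L[j] ↔ L[j] < L[i] :=
    hf.lt_iff_gt (hL _ (List.getElem_mem hi)) (hL _ (List.getElem_mem hj))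
  simp +contextual only [IsAlternating, List.length_map, List.getElem_map, hlt]

end IsAlternating

section Words

variable {α : Type*}

/-- The words that use each element of `S` exactly once and alternate with respect to `r`. -/
def alternatingWords (r : α → α → Prop) (S : Finset α) : Set (List α) :=
  {w | w.Nodup ∧ (∀ x, x ∈ w ↔ x ∈ S) ∧ IsAlternating r w}

/-- The words of even length that use elements of `T` at most once and alternate with respect
to `r`. -/
def evenAlternatingWords (r : α → α → Prop) (T : Finset α) : Set (List α) :=
  {w | w.Nodup ∧ (∀ x ∈ w, x ∈ T) ∧ IsAlternating r w ∧ Even w.length}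

theorem alternatingWords_empty (r : α → α → Prop) : alternatingWords r ∅ = {[]} := by
  ext w
  constructor
  · rintro ⟨-, hmem, -⟩
    exact List.eq_nil_iff_forall_not_mem.2 fun x hx ↦ Finset.notMem_empty x ((hmem x).1 hx)
  · rintro rfl
    exact ⟨List.nodup_nil, by simp, fun i hi ↦ by simp at hi⟩

theorem nodup_cons_of_mem_evenAlternatingWords {r : α → α → Prop} {a : α} {T : Finset α}
    {L : List α} (ha : a ∉ T) (hL : L ∈ evenAlternatingWords r T) : (a :: L).Nodup :=
  List.nodup_cons.2 ⟨fun h ↦ ha (hL.2.1 a h), hL.1⟩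

theorem nodup_and_mem_reverse_append_cons_iff [DecidableEq α] {a : α} {T : Finset α} (ha : a ∉ T)
    {L R : List α} :
    ((L.reverse ++ a :: R).Nodup ∧ ∀ x, x ∈ L.reverse ++ a :: R ↔ x ∈ insert a T) ↔
      (L.Nodup ∧ ∀ x ∈ L, x ∈ T) ∧ R.Nodup ∧ ∀ x, x ∈ R ↔ x ∈ T \ L.toFinset := by
  simp only [List.nodup_append, List.nodup_reverse, List.nodup_cons, List.mem_append,
    List.mem_reverse, List.mem_cons, Finset.mem_insert, Finset.mem_sdiff, List.mem_toFinset]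
  grind

theorem reverse_append_cons_mem_alternatingWords_iff [DecidableEq α] {r : α → α → Prop}
    [Std.Asymm r] {a : α} {T : Finset α} (ha : ∀ x ∈ T, r a x) {L R : List α} :
    L.reverse ++ a :: R ∈ alternatingWords r (insert a T) ↔
      L ∈ evenAlternatingWords (flip r) T ∧ R ∈ alternatingWords (flip r) (T \ L.toFinset) := by
  have hletters := nodup_and_mem_reverse_append_cons_iff (L := L) (R := R)
    fun h : a ∈ T ↦ Std.Asymm.asymm _ _ (ha a h) (ha a h)
  have halt (hL : ∀ x ∈ L, x ∈ T) (hR : ∀ x, x ∈ R ↔ x ∈ T \ L.toFinset) :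
      IsAlternating r (L.reverse ++ a :: R) ↔
        IsAlternating r L.reverse ∧ Even L.length ∧ IsAlternating (flip r) R := by
    rw [IsAlternating.append_cons_iff, List.length_reverse]
    · exact fun x hx ↦ ha x (hL x (List.mem_reverse.1 hx))
    · exact fun x hx ↦ ha x (Finset.mem_sdiff.1 ((hR x).1 hx)).1
  constructor
  · rintro ⟨hnodup, hmem, h⟩
    obtain ⟨⟨hLnodup, hL⟩, hRnodup, hR⟩ := hletters.1 ⟨hnodup, hmem⟩
    obtain ⟨hAltL, heven, hAltR⟩ := (halt hL hR).1 h
    have hAltL' := hAltL.reverse_of_even (by rwa [List.length_reverse])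
    rw [List.reverse_reverse] at hAltL'
    exact ⟨⟨hLnodup, hL, hAltL', heven⟩, hRnodup, hR, hAltR⟩
  · rintro ⟨⟨hLnodup, hL, hAltL, heven⟩, hRnodup, hR, hAltR⟩
    obtain ⟨hnodup, hmem⟩ := hletters.2 ⟨⟨hLnodup, hL⟩, hRnodup, hR⟩
    exact ⟨hnodup, hmem, (halt hL hR).2 ⟨hAltL.reverse_of_even heven, heven, hAltR⟩⟩

/-- An alternating word on `insert a T` is determined by what stands left of the extremal letter
`a`, read backwards, and what stands right of it. -/
noncomputable def sigmaEquivAlternatingWordsInsert [DecidableEq α] {r : α → α → Prop}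
    [Std.Asymm r] {a : α} {T : Finset α} (ha : ∀ x ∈ T, r a x) :
    (Σ L : evenAlternatingWords (flip r) T, alternatingWords (flip r) (T \ L.1.toFinset)) ≃
      alternatingWords r (insert a T) :=
  Equiv.ofBijective (fun X ↦ ⟨X.1.1.reverse ++ a :: X.2.1,
    (reverse_append_cons_mem_alternatingWords_iff ha).2 ⟨X.1.2, X.2.2⟩⟩) <| by
    constructor
    · rintro ⟨⟨L, hL⟩, R, hR⟩ ⟨⟨L', hL'⟩, R', hR'⟩ heq
      have haT : a ∉ T := fun h ↦ Std.Asymm.asymm _ _ (ha a h) (ha a h)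
      have haL : a ∉ L.reverse := fun h ↦ haT (hL.2.1 a (List.mem_reverse.1 h))
      have haR : a ∉ R := fun h ↦ haT (Finset.mem_sdiff.1 ((hR.2.1 a).1 h)).1
      obtain ⟨hrev, -, rfl⟩ :=
        (List.append_cons_inj_of_notMem haL haR).1 (congrArg Subtype.val heq)
      obtain rfl := List.reverse_injective hrev
      rfl
    · rintro ⟨w, hw⟩
      obtain ⟨L, R, rfl⟩ := List.append_of_mem ((hw.2.1 a).2 (Finset.mem_insert_self a T))
      obtain ⟨L, rfl⟩ := List.reverse_surjective L
      obtain ⟨hL, hR⟩ := (reverse_append_cons_mem_alternatingWords_iff ha).1 hw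
      exact ⟨⟨⟨L, hL⟩, R, hR⟩, rfl⟩

variable [LinearOrder α]

theorem exists_perm_strictAntiOn (T : Finset α) :
    ∃ f : Perm α, (∀ x, f x ∈ T ↔ x ∈ T) ∧ StrictAntiOn f T := by
  let e := T.orderIsoOfFin rfl
  let ρ : Perm T := (e.symm.toEquiv.trans Fin.revPerm).trans e.toEquiv
  refine ⟨Perm.ofSubtype ρ, fun x ↦ ?_, fun x hx y hy hxy ↦ ?_⟩
  · exact Perm.ofSubtype_apply_mem_iff_mem ρ x
  · rw [Perm.ofSubtype_apply_of_mem ρ hx, Perm.ofSubtype_apply_of_mem ρ hy]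
    exact e.strictMono (Fin.rev_lt_rev.2 (e.symm.strictMono hxy))

theorem nonempty_upDownWords_equiv_downUpWords (T : Finset α) :
    Nonempty (alternatingWords (· < ·) T ≃ alternatingWords (· > ·) T) := by
  obtain ⟨f, hfT, hanti⟩ := exists_perm_strictAntiOn T
  refine ⟨(Equiv.listEquivOfEquiv f).subtypeEquiv fun w ↦ ?_⟩
  have hmem : (∀ x, x ∈ w.map f ↔ x ∈ T) ↔ ∀ x, x ∈ w ↔ x ∈ T := by
    rw [← f.forall_congr_right]
    simp only [List.mem_map_of_injective f.injective, hfT]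
  change _ ↔ (w.map f).Nodup ∧ (∀ x, x ∈ w.map f ↔ x ∈ T) ∧ IsAlternating (· > ·) (w.map f)
  rw [List.nodup_map_iff f.injective, hmem]
  refine and_congr_right fun _ ↦ and_congr_right fun hw ↦ ?_
  exact (IsAlternating.map_iff_of_strictAntiOn hanti fun x hx ↦ (hw x).1 hx).symm

end Words

section CycleWord

variable {α : Type*}

/-- The cycle `[x, f x, f (f x), …]` of `f` through `x`, as a word starting at `x`. It is empty if
`x` is not a periodic point. -/
noncomputable def cycleWord (f : α → α) (x : α) : List α :=
  List.iterate f x (Function.minimalPeriod f x)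

theorem length_cycleWord (f : α → α) (x : α) :
    (cycleWord f x).length = Function.minimalPeriod f x :=
  List.length_iterate ..

theorem getElem_cycleWord (f : α → α) (x : α) (i : ℕ) (hi : i < (cycleWord f x).length) :
    (cycleWord f x)[i] = f^[i] x :=
  List.getElem_iterate ..

theorem coe_cycleWord (f : α → α) (x : α) :
    (cycleWord f x : Cycle α) = Function.periodicOrbit f x := by
  rw [cycleWord, ← List.range_map_iterate, Function.periodicOrbit]

theorem nodup_cycleWord (f : α → α) (x : α) : (cycleWord f x).Nodup := by
  rw [← Cycle.nodup_coe_iff, coe_cycleWord]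
  exact Function.nodup_periodicOrbit

theorem mem_cycleWord_iff {f : α → α} {x y : α} (hx : x ∈ Function.periodicPts f) :
    y ∈ cycleWord f x ↔ ∃ k, f^[k] x = y := by
  rw [← Cycle.mem_coe_iff, coe_cycleWord, Function.mem_periodicOrbit_iff hx]

theorem cycleWord_of_apply_eq {f : α → α} {x : α} (hx : f x = x) : cycleWord f x = [x] := by
  rw [cycleWord, Function.minimalPeriod_eq_one_iff_isFixedPt.2 hx]
  rfl

theorem cycleWord_congr {f g : α → α} {x : α} (h : ∀ k, f^[k] x = g^[k] x) :
    cycleWord f x = cycleWord g x := by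
  have hperiod : Function.minimalPeriod f x = Function.minimalPeriod g x :=
    Function.minimalPeriod_eq_minimalPeriod_iff.2 fun k ↦ by
      rw [Function.IsPeriodicPt, Function.IsFixedPt, h]; rfl
  rw [cycleWord, cycleWord, hperiod, ← List.range_map_iterate, ← List.range_map_iterate]
  simp only [h]

theorem cycleWord_mul_of_disjoint {π σ : Perm α} (h : π.Disjoint σ) {x : α} (hx : σ x = x) :
    cycleWord (π * σ : Perm α) x = cycleWord π x :=
  cycleWord_congr fun k ↦ by
    rw [Perm.iterate_eq_pow, h.commute.mul_pow, Perm.mul_apply,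
      Perm.pow_apply_eq_self_of_apply_eq_self hx, Perm.iterate_eq_pow]

theorem mem_of_mem_cycleWord {f : α → α} (hinj : f.Injective) {s : Set α}
    (hfix : ∀ z ∉ s, f z = z) {x y : α} (hx : x ∈ s) (hy : y ∈ cycleWord f x) : y ∈ s := by
  obtain ⟨k, -, rfl⟩ := List.getElem_of_mem hy
  rw [getElem_cycleWord]
  refine Function.Iterate.rec (· ∈ s) hx (fun z hz ↦ ?_) k
  by_contra hfz
  exact hfz ((hinj (hfix _ hfz)).symm ▸ hz)

variable [DecidableEq α]

theorem minimalPeriod_formPerm {l : List α} (hl : l.Nodup) {x : α} (hx : x ∈ l) :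
    Function.minimalPeriod l.formPerm x = l.length := by
  obtain ⟨i, hi, rfl⟩ := List.getElem_of_mem hx
  have hdvd (k : ℕ) : Function.minimalPeriod l.formPerm l[i] ∣ k ↔ l.length ∣ k := by
    rw [← Function.isPeriodicPt_iff_minimalPeriod_dvd, Function.IsPeriodicPt,
      Function.IsFixedPt, Perm.iterate_eq_pow, List.formPerm_pow_apply_getElem _ hl,
      hl.getElem_inj_iff, ← Nat.modEq_zero_iff_dvd]
    constructor
    · exact fun h ↦ Nat.ModEq.add_left_cancel' i (h.trans (Nat.mod_eq_of_lt hi).symm)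
    · exact fun h ↦ Eq.trans (h.add_left i) (Nat.mod_eq_of_lt hi)
  exact Nat.dvd_antisymm ((hdvd _).2 dvd_rfl) ((hdvd _).1 dvd_rfl)

theorem cycleWord_formPerm_getElem {l : List α} (hl : l.Nodup) (i : ℕ) (hi : i < l.length) :
    cycleWord l.formPerm l[i] = l.rotate i := by
  refine List.ext_getElem ?_ fun k hk _ ↦ ?_
  · rw [length_cycleWord, minimalPeriod_formPerm hl (List.getElem_mem hi), List.length_rotate]
  · simp only [getElem_cycleWord, Perm.iterate_eq_pow, List.formPerm_pow_apply_getElem _ hl,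
      List.getElem_rotate, add_comm]

theorem formPerm_cycleWord_apply {f : α → α} {x y : α} (hy : y ∈ cycleWord f x) :
    (cycleWord f x).formPerm y = f y := by
  obtain ⟨i, hi, rfl⟩ := List.getElem_of_mem hy
  rw [List.formPerm_apply_getElem _ (nodup_cycleWord f x), getElem_cycleWord, getElem_cycleWord,
    length_cycleWord, Function.iterate_mod_minimalPeriod_eq, Function.iterate_succ_apply']

theorem disjoint_formPerm_of_forall_apply_eq {l : List α} {σ : Perm α} (hσ : ∀ x ∈ l, σ x = x) :
    l.formPerm.Disjoint σ := fun x ↦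
  (em (x ∈ l)).elim (fun hx ↦ .inr (hσ x hx)) fun hx ↦ .inl (List.formPerm_apply_of_notMem hx)

theorem cycleWord_formPerm_mul {σ : Perm α} {a : α} {L : List α} (hnodup : (a :: L).Nodup)
    (hσ : ∀ x ∈ a :: L, σ x = x) : cycleWord ((a :: L).formPerm * σ : Perm α) a = a :: L := by
  rw [cycleWord_mul_of_disjoint (disjoint_formPerm_of_forall_apply_eq hσ) (hσ a List.mem_cons_self)]
  exact (cycleWord_formPerm_getElem hnodup 0 (by simp)).trans (List.rotate_zero _)

end CycleWord

section OddUpDown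

variable {α : Type*} [LinearOrder α]

/-- The cycle of `π` through `x` has odd length and, if `x` is its least element, reading it from
`x` gives an up-down word. -/
def IsOddUpDownAt (π : Perm α) (x : α) : Prop :=
  Odd (cycleWord π x).length ∧
    ((∀ y ∈ cycleWord π x, x ≤ y) → IsAlternating (· < ·) (cycleWord π x))

theorem isOddUpDownAt_of_apply_eq {π : Perm α} {x : α} (hx : π x = x) : IsOddUpDownAt π x := by
  rw [IsOddUpDownAt, cycleWord_of_apply_eq hx]
  exact ⟨odd_one, fun _ i hi ↦ by simp at hi⟩

theorem forall_isOddUpDownAt_mul_iff {π σ : Perm α} (h : π.Disjoint σ) :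
    (∀ x, IsOddUpDownAt (π * σ) x) ↔ (∀ x, IsOddUpDownAt π x) ∧ ∀ x, IsOddUpDownAt σ x := by
  have hπ {x : α} (hx : σ x = x) : IsOddUpDownAt (π * σ) x ↔ IsOddUpDownAt π x := by
    rw [IsOddUpDownAt, cycleWord_mul_of_disjoint h hx, IsOddUpDownAt]
  have hσ {x : α} (hx : π x = x) : IsOddUpDownAt (π * σ) x ↔ IsOddUpDownAt σ x := by
    rw [IsOddUpDownAt, h.commute.eq, cycleWord_mul_of_disjoint h.symm hx, IsOddUpDownAt]
  rw [← forall_and]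
  refine forall_congr' fun x ↦ ?_
  rcases h x with hx | hx
  · rw [hσ hx, and_iff_right (isOddUpDownAt_of_apply_eq hx)]
  · rw [hπ hx, and_iff_left (isOddUpDownAt_of_apply_eq hx)]

theorem forall_isOddUpDownAt_formPerm_cons_iff {a : α} {L : List α} (hnodup : (a :: L).Nodup)
    (ha : ∀ x ∈ L, a < x) :
    (∀ x, IsOddUpDownAt (a :: L).formPerm x) ↔ IsAlternating (· > ·) L ∧ Even L.length := by
  have hcons : IsAlternating (· < ·) (a :: L) ↔ IsAlternating (· > ·) L :=
    IsAlternating.cons_iff ha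
  have hword (i : ℕ) (hi : i < (a :: L).length) :
      cycleWord (a :: L).formPerm (a :: L)[i] = (a :: L).rotate i :=
    cycleWord_formPerm_getElem hnodup i hi
  have hodd : Odd (a :: L).length ↔ Even L.length := by
    rw [List.length_cons, Nat.odd_add_one, Nat.not_odd_iff_even]
  constructor
  · intro h
    obtain ⟨hlen, halt⟩ := h (a :: L)[0]
    rw [hword, List.rotate_zero] at hlen halt
    refine ⟨hcons.1 (halt fun y hy ↦ ?_), hodd.1 hlen⟩
    rcases List.mem_cons.1 hy with rfl | hy
    exacts [le_rfl, (ha y hy).le]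
  · rintro ⟨halt, heven⟩ x
    by_cases hx : x ∈ a :: L
    · obtain ⟨i, hi, rfl⟩ := List.getElem_of_mem hx
      rw [IsOddUpDownAt, hword, List.length_rotate]
      refine ⟨hodd.2 heven, fun hmin ↦ ?_⟩
      -- Every rotation of `a :: L` contains `a`, so only the trivial one starts at its minimum.
      have hle : (a :: L)[i] ≤ a := hmin a (by simp)
      rcases i with _ | i
      · simpa using hcons.2 halt
      · exact absurd (ha _ (List.getElem_mem _)) hle.not_gt
    · exact isOddUpDownAt_of_apply_eq (List.formPerm_apply_of_notMem hx)

/-- The cycle-up-down permutations of `S`, all of whose cycles have odd length, extended to `α` by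
fixing every element outside `S`. -/
def oddCUDPerms (S : Finset α) : Set (Perm α) :=
  {π | (∀ x ∉ S, π x = x) ∧ ∀ x, IsOddUpDownAt π x}

theorem oddCUDPerms_empty : oddCUDPerms (∅ : Finset α) = {1} := by
  ext π
  constructor
  · exact fun hπ ↦ Equiv.ext fun x ↦ hπ.1 x (Finset.notMem_empty x)
  · rintro rfl
    exact ⟨fun _ _ ↦ rfl, fun x ↦ isOddUpDownAt_of_apply_eq rfl⟩

variable {a : α} {T : Finset α} {L : List α}

theorem formPerm_mul_mem_oddCUDPerms_iff (ha : ∀ x ∈ T, a < x) (hnodup : (a :: L).Nodup)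
    (hLT : ∀ x ∈ L, x ∈ T) {σ : Perm α} (hσ : ∀ x ∈ a :: L, σ x = x) :
    (a :: L).formPerm * σ ∈ oddCUDPerms (insert a T) ↔
      L ∈ evenAlternatingWords (· > ·) T ∧ σ ∈ oddCUDPerms (T \ L.toFinset) := by
  have hfix : (∀ x ∉ insert a T, ((a :: L).formPerm * σ) x = x) ↔
      ∀ x ∉ T \ L.toFinset, σ x = x := by
    have hout {x : α} (hx : x ∉ insert a T) : x ∉ a :: L := by grind
    constructor
    · intro h x hx
      by_cases hxl : x ∈ a :: L
      · exact hσ x hxl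
      · have hfixed := h x (by grind [List.mem_toFinset])
        rw [Perm.mul_apply, ← Perm.eq_inv_iff_eq] at hfixed
        rwa [hfixed, Perm.inv_eq_iff_eq, eq_comm, List.formPerm_apply_of_notMem]
    · intro h x hx
      rw [Perm.mul_apply, h x (by grind), List.formPerm_apply_of_notMem (hout hx)]
  have hgood := forall_isOddUpDownAt_mul_iff (disjoint_formPerm_of_forall_apply_eq hσ)
  rw [forall_isOddUpDownAt_formPerm_cons_iff hnodup fun x hx ↦ ha x (hLT x hx)] at hgood
  have hLnodup := hnodup.of_cons
  simp only [oddCUDPerms, evenAlternatingWords, Set.mem_ofPred_eq, hfix, hgood]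
  tauto

theorem apply_eq_of_mem_oddCUDPerms_sdiff (ha : a ∉ T) {σ : Perm α}
    (hσ : σ ∈ oddCUDPerms (T \ L.toFinset)) : ∀ x ∈ a :: L, σ x = x :=
  fun x hx ↦ hσ.1 x (by grind [List.mem_toFinset])

theorem exists_eq_formPerm_mul_of_mem_oddCUDPerms (ha : ∀ x ∈ T, a < x) {π : Perm α}
    (hπ : π ∈ oddCUDPerms (insert a T)) :
    ∃ L ∈ evenAlternatingWords (· > ·) T, ∃ σ ∈ oddCUDPerms (T \ L.toFinset),
      (a :: L).formPerm * σ = π := by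
  obtain ⟨L, hL⟩ : ∃ L, cycleWord π a = a :: L := by
    obtain ⟨n, hn⟩ := Nat.exists_eq_succ_of_ne_zero (hπ.2 a).1.pos.ne'
    rw [length_cycleWord] at hn
    exact ⟨_, by rw [cycleWord, hn]; rfl⟩
  have hnodup : (a :: L).Nodup := hL ▸ nodup_cycleWord π a
  have hLT : ∀ x ∈ L, x ∈ T := fun x hx ↦ by
    have hmem : x ∈ insert a T :=
      mem_of_mem_cycleWord π.injective hπ.1 (Finset.mem_insert_self a T)
        (hL ▸ List.mem_cons_of_mem a hx)
    exact Finset.mem_of_mem_insert_of_ne hmem fun h ↦ (List.nodup_cons.1 hnodup).1 (h ▸ hx)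
  have hσ : ∀ x ∈ a :: L, ((a :: L).formPerm⁻¹ * π) x = x := fun x hx ↦ by
    rw [← hL] at hx ⊢
    rw [Perm.mul_apply, Perm.inv_eq_iff_eq, formPerm_cycleWord_apply hx]
  obtain ⟨hLmem, hσmem⟩ := (formPerm_mul_mem_oddCUDPerms_iff ha hnodup hLT hσ).1
    (by rwa [mul_inv_cancel_left])
  exact ⟨L, hLmem, _, hσmem, mul_inv_cancel_left _ _⟩

/-- An odd cycle-up-down permutation of `insert a T` is determined by the cycle of the least element
`a`, read from `a`, and its restriction to the remaining elements. -/
noncomputable def sigmaEquivOddCUDPermsInsert (ha : ∀ x ∈ T, a < x) :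
    (Σ L : evenAlternatingWords (· > ·) T, oddCUDPerms (T \ L.1.toFinset)) ≃
      oddCUDPerms (insert a T) :=
  have haT : a ∉ T := fun h ↦ (ha a h).false
  have hnodup (L : evenAlternatingWords (· > ·) T) : (a :: L.1).Nodup :=
    nodup_cons_of_mem_evenAlternatingWords haT L.2
  Equiv.ofBijective (fun X ↦ ⟨(a :: X.1.1).formPerm * X.2.1,
    (formPerm_mul_mem_oddCUDPerms_iff ha (hnodup X.1) X.1.2.2.1
      (apply_eq_of_mem_oddCUDPerms_sdiff haT X.2.2)).2 ⟨X.1.2, X.2.2⟩⟩) <| by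
    constructor
    · rintro ⟨⟨L, hL⟩, σ, hσ⟩ ⟨⟨L', hL'⟩, σ', hσ'⟩ heq
      have hmul : (a :: L).formPerm * σ = (a :: L').formPerm * σ' := congrArg Subtype.val heq
      have hwords : a :: L = a :: L' := by
        rw [← cycleWord_formPerm_mul (hnodup ⟨L, hL⟩) (apply_eq_of_mem_oddCUDPerms_sdiff haT hσ),
          hmul, cycleWord_formPerm_mul (hnodup ⟨L', hL'⟩)
            (apply_eq_of_mem_oddCUDPerms_sdiff haT hσ')]
      obtain rfl := List.tail_eq_of_cons_eq hwords
      obtain rfl := mul_left_cancel hmul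
      rfl
    · rintro ⟨π, hπ⟩
      obtain ⟨L, hL, σ, hσ, rfl⟩ := exists_eq_formPerm_mul_of_mem_oddCUDPerms ha hπ
      exact ⟨⟨⟨L, hL⟩, σ, hσ⟩, rfl⟩

theorem nonempty_oddCUDPerms_equiv_upDownWords (S : Finset α) :
    Nonempty (oddCUDPerms S ≃ alternatingWords (· < ·) S) := by
  induction S using Finset.strongInduction with
  | H S ih =>
    rcases S.eq_empty_or_nonempty with rfl | hS
    · rw [oddCUDPerms_empty, alternatingWords_empty]
      exact ⟨Equiv.ofUnique _ _⟩
    · obtain ⟨a, T, ha, rfl⟩ : ∃ a T, (∀ x ∈ T, a < x) ∧ insert a T = S :=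
        ⟨S.min' hS, S.erase (S.min' hS), fun x ↦ S.min'_lt_of_mem_erase_min' hS,
          Finset.insert_erase (S.min'_mem hS)⟩
      have hrest (L : evenAlternatingWords (· > ·) T) :
          Nonempty (oddCUDPerms (T \ L.1.toFinset) ≃
            alternatingWords (· > ·) (T \ L.1.toFinset)) := by
        obtain ⟨e⟩ := ih (T \ L.1.toFinset) <| Finset.sdiff_subset.trans_ssubset <|
          Finset.ssubset_insert fun h ↦ (ha a h).false
        obtain ⟨f⟩ := nonempty_upDownWords_equiv_downUpWords (T \ L.1.toFinset)
        exact ⟨e.trans f⟩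
      exact ⟨(sigmaEquivOddCUDPermsInsert ha).symm.trans <|
        (Equiv.sigmaCongrRight fun L ↦ (hrest L).some).trans <|
          sigmaEquivAlternatingWordsInsert (r := (· < ·)) ha⟩

end OddUpDown

section FinPerm

variable {m : ℕ}

theorem isOrbitMin_iff (π : Perm (Fin m)) (x : Fin m) :
    IsOrbitMin π x ↔ ∀ y ∈ cycleWord π x, x ≤ y := by
  have hx : x ∈ Function.periodicPts π := π.injective.mem_periodicPts x
  simp only [mem_cycleWord_iff hx, Perm.iterate_eq_pow, forall_exists_index,
    forall_apply_eq_imp_iff, IsOrbitMin]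

theorem cycleUpDownAt_iff (π : Perm (Fin m)) (x : Fin m) :
    CycleUpDownAt π x ↔ IsAlternating (· < ·) (cycleWord π x) := by
  simp only [CycleUpDownAt, IsAlternating, length_cycleWord, getElem_cycleWord,
    Perm.iterate_eq_pow, cycLen]

theorem mem_oddCUDPerms_univ_iff (π : Perm (Fin m)) :
    π ∈ oddCUDPerms Finset.univ ↔ IsCUD π ∧ ∀ x, Odd (cycLen π x) := by
  simp only [oddCUDPerms, IsOddUpDownAt, Set.mem_ofPred_eq, Finset.mem_univ, not_true_eq_false,
    IsEmpty.forall_iff, implies_true, true_and, length_cycleWord, ← isOrbitMin_iff,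
    ← cycleUpDownAt_iff, forall_and, IsCUD, cycLen, and_comm]

theorem ofFn_mem_alternatingWords_univ_iff (π : Perm (Fin m)) :
    List.ofFn π ∈ alternatingWords (· < ·) Finset.univ ↔ IsUpDownPerm π := by
  have hmem (x : Fin m) : x ∈ List.ofFn π ↔ x ∈ Finset.univ := by
    simpa using π.surjective x
  have halt : IsAlternating (· < ·) (List.ofFn π) ↔ IsUpDownPerm π := by
    simp only [IsAlternating, List.length_ofFn, List.getElem_ofFn]
    constructor
    · rintro h ⟨i, hi⟩ ⟨_, hj⟩ rfl
      exact h i hj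
    · exact fun h i hi ↦ h ⟨i, by omega⟩ ⟨i + 1, hi⟩ rfl
  exact ⟨fun h ↦ halt.1 h.2.2, fun h ↦ ⟨List.nodup_ofFn.2 π.injective, hmem, halt.2 h⟩⟩

theorem exists_perm_ofFn_eq {w : List (Fin m)} (hnodup : w.Nodup) (hmem : ∀ x, x ∈ w) :
    ∃ π : Perm (Fin m), List.ofFn π = w := by
  have hlen : w.length = m := by
    simpa using Fintype.card_congr (hnodup.getEquivOfForallMemList w hmem)
  refine ⟨(finCongr hlen.symm).trans (hnodup.getEquivOfForallMemList w hmem), ?_⟩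
  refine List.ext_getElem (by simp [hlen]) fun i _ _ ↦ ?_
  simp

theorem nonempty_upDownPerms_equiv_upDownWords (m : ℕ) :
    Nonempty ({π : Perm (Fin m) // IsUpDownPerm π} ≃
      alternatingWords (· < ·) (Finset.univ : Finset (Fin m))) := by
  refine ⟨Equiv.ofBijective
    (fun π ↦ ⟨List.ofFn π.1, (ofFn_mem_alternatingWords_univ_iff π.1).2 π.2⟩) ⟨?_, ?_⟩⟩
  · intro π ρ h
    exact Subtype.ext (Equiv.coe_fn_injective (List.ofFn_injective (congrArg Subtype.val h)))
  · rintro ⟨w, hw⟩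
    obtain ⟨π, rfl⟩ := exists_perm_ofFn_eq hw.1 fun x ↦ (hw.2.1 x).2 (Finset.mem_univ x)
    exact ⟨⟨π, (ofFn_mem_alternatingWords_univ_iff π).1 hw⟩, rfl⟩

end FinPerm

/-- CUD permutations of `[m]` with all cycles odd are counted by `E m`. -/
theorem stmt2 (m : ℕ) :
    Nat.card {π : Equiv.Perm (Fin m) //
      IsCUD π ∧ ∀ x : Fin m, Odd (cycLen π x)} = eulerE m := by
  obtain ⟨e⟩ := nonempty_oddCUDPerms_equiv_upDownWords (Finset.univ : Finset (Fin m))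
  obtain ⟨f⟩ := nonempty_upDownPerms_equiv_upDownWords m
  exact Nat.card_congr <|
    (Equiv.subtypeEquivRight fun π ↦ (mem_oddCUDPerms_univ_iff π).symm).trans (e.trans f.symm)
end

section
/- For every k ≥ 0, the number of cyclic permutations of [2k+1] whose unique cycle is generalized up-down equals E_{2k+1}, the number of up-down permutations of [2k+1]. (Equivalently, a generalized up-down cycle of odd length admits a unique up-down representation.) -/
open Equiv Finset

/-!
A cyclic representation `(a, π a, …, π ^ (n - 1) a)` of a cyclic permutation `π` of `[n]` is the
one-line notation of a permutation `σ`, and `(π, a)` is recovered from `σ`, so `E_n` counts the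
pairs `(π, a)` in which `π` is up-down from `a`. In a cycle of odd length `l` the starting point `a`
is determined by `π`: of two distinct starting points, one is reached from the other by an odd
number `m < l` of steps, and there one representation has an ascent where the other has a descent.
-/

section Uniqueness

variable {n : ℕ} {π : Perm (Fin n)} {a b : Fin n}

theorem pow_cycLen_apply (π : Perm (Fin n)) (a : Fin n) : (π ^ cycLen π a) a = a := by
  rw [← Perm.iterate_eq_pow]
  exact Function.iterate_minimalPeriod

theorem cycLen_pos (π : Perm (Fin n)) (a : Fin n) : 0 < cycLen π a :=
  Function.minimalPeriod_pos_of_mem_periodicPts (π.injective.mem_periodicPts a)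

theorem cycLen_pow_apply (π : Perm (Fin n)) (m : ℕ) (a : Fin n) :
    cycLen π ((π ^ m) a) = cycLen π a := by
  rw [← Perm.iterate_eq_pow]
  exact Function.minimalPeriod_apply_iterate (π.injective.mem_periodicPts a) m

theorem exists_lt_cycLen_pow_apply_eq (h : π.SameCycle a b) :
    ∃ m < cycLen π a, (π ^ m) a = b := by
  obtain ⟨i, hi⟩ := h.exists_nat_pow_eq
  refine ⟨i % cycLen π a, Nat.mod_lt _ (cycLen_pos π a), ?_⟩
  rw [← hi, ← Perm.iterate_eq_pow, ← Perm.iterate_eq_pow]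
  exact Function.iterate_mod_minimalPeriod_eq

theorem CycleUpDownAt.not_cycleUpDownAt_pow_apply {m : ℕ} (ha : CycleUpDownAt π a)
    (hm : Odd m) (hlt : m + 1 < cycLen π a) : ¬ CycleUpDownAt π ((π ^ m) a) := by
  intro hb
  have descent : (π ^ (m + 1)) a < (π ^ m) a := (ha m hlt).2 (Nat.odd_iff.mp hm)
  have ascent : (π ^ m) a < π ((π ^ m) a) := by
    simpa using (hb 0 (by rw [cycLen_pow_apply]; lia)).1 rfl
  rw [pow_succ', Perm.mul_apply] at descent
  exact lt_asymm ascent descent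

theorem CycleUpDownAt.eq_of_sameCycle (ha : CycleUpDownAt π a) (hb : CycleUpDownAt π b)
    (hab : π.SameCycle a b) (hodd : Odd (cycLen π a)) : a = b := by
  obtain ⟨m, hlt, rfl⟩ := exists_lt_cycLen_pow_apply_eq hab
  by_contra hne
  have hm0 : m ≠ 0 := by
    rintro rfl
    exact hne rfl
  rcases Nat.even_or_odd m with heven | hmodd
  · have hback : (π ^ (cycLen π a - m)) ((π ^ m) a) = a := by
      rw [← Perm.mul_apply, ← pow_add, Nat.sub_add_cancel hlt.le, pow_cycLen_apply]
    refine hb.not_cycleUpDownAt_pow_apply (Nat.Odd.sub_even hlt.le hodd heven) ?_ (hback.symm ▸ ha)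
    rw [cycLen_pow_apply]
    grind
  · exact ha.not_cycleUpDownAt_pow_apply hmodd (by grind) hb

end Uniqueness

section CyclicPerm

variable {n : ℕ} {π : Perm (Fin n)}

namespace IsCyclicPerm

theorem isCycleOn_univ (hπ : IsCyclicPerm π) : π.IsCycleOn (univ : Finset (Fin n)) :=
  ⟨by simp, fun x _ y _ => hπ x y⟩

theorem pow_apply_eq_pow_apply_iff (hπ : IsCyclicPerm π) (a : Fin n) {i j : ℕ} :
    (π ^ i) a = (π ^ j) a ↔ i ≡ j [MOD n] := by
  simpa using hπ.isCycleOn_univ.pow_apply_eq_pow_apply (mem_univ a)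

theorem cycLen_eq (hπ : IsCyclicPerm π) (a : Fin n) : cycLen π a = n := by
  refine Nat.dvd_right_iff_eq.mp fun m => ?_
  rw [cycLen, ← Function.isPeriodicPt_iff_minimalPeriod_dvd, Function.IsPeriodicPt,
    Function.IsFixedPt, Perm.iterate_eq_pow]
  simpa using hπ.isCycleOn_univ.pow_apply_eq (mem_univ a)

theorem pow_apply_bijective (hπ : IsCyclicPerm π) (a : Fin n) :
    Function.Bijective fun i : Fin n => (π ^ (i : ℕ)) a :=
  Finite.injective_iff_bijective.mp fun i j hij =>
    Fin.ext (((hπ.pow_apply_eq_pow_apply_iff a).mp hij).eq_of_lt_of_lt i.isLt j.isLt)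

/-- The cyclic representation `a, π a, π² a, …` of a cyclic permutation `π`, regarded as the
one-line notation of a permutation. -/
noncomputable def wordFrom (hπ : IsCyclicPerm π) (a : Fin n) : Perm (Fin n) :=
  Equiv.ofBijective _ (hπ.pow_apply_bijective a)

theorem wordFrom_apply (hπ : IsCyclicPerm π) (a i : Fin n) :
    hπ.wordFrom a i = (π ^ (i : ℕ)) a :=
  rfl

theorem isUpDownPerm_wordFrom_iff (hπ : IsCyclicPerm π) (a : Fin n) :
    IsUpDownPerm (hπ.wordFrom a) ↔ CycleUpDownAt π a := by
  simp only [IsUpDownPerm, CycleUpDownAt, hπ.cycLen_eq a, wordFrom_apply]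
  constructor
  · exact fun h i hi => h ⟨i, by lia⟩ ⟨i + 1, hi⟩ rfl
  · intro h i j hij
    rw [hij]
    exact h i (hij ▸ j.isLt)

end IsCyclicPerm

/-- The cyclic permutation `(σ 0, σ 1, …, σ (n - 1))` whose cyclic representation is the one-line
notation of `σ`. -/
def cycleOfWord (σ : Perm (Fin n)) : Perm (Fin n) :=
  σ * finRotate n * σ⁻¹

variable [NeZero n]

theorem finRotate_pow_apply_zero (i : ℕ) : (finRotate n ^ i) 0 = Fin.ofNat n i := by
  induction i with
  | zero => rfl
  | succ i ih =>
    rw [pow_succ', Perm.mul_apply, ih, finRotate_apply]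
    ext
    simp [Fin.val_add]

theorem cycleOfWord_pow_apply (σ : Perm (Fin n)) (i : ℕ) :
    (cycleOfWord σ ^ i) (σ 0) = σ (Fin.ofNat n i) := by
  simp [cycleOfWord, conj_pow, finRotate_pow_apply_zero]

theorem isCyclicPerm_cycleOfWord (σ : Perm (Fin n)) : IsCyclicPerm (cycleOfWord σ) := by
  have sameCycle_zero (x : Fin n) : (cycleOfWord σ).SameCycle (σ 0) x :=
    ⟨(σ⁻¹ x : Fin n), by simp [cycleOfWord_pow_apply]⟩
  exact fun x y => (sameCycle_zero x).symm.trans (sameCycle_zero y)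

theorem wordFrom_cycleOfWord (σ : Perm (Fin n)) :
    (isCyclicPerm_cycleOfWord σ).wordFrom (σ 0) = σ := by
  ext1 i
  simp [IsCyclicPerm.wordFrom_apply, cycleOfWord_pow_apply]

theorem IsCyclicPerm.wordFrom_apply_zero (hπ : IsCyclicPerm π) (a : Fin n) :
    hπ.wordFrom a 0 = a := by
  simp [wordFrom_apply]

theorem IsCyclicPerm.wordFrom_add_one (hπ : IsCyclicPerm π) (a i : Fin n) :
    hπ.wordFrom a (i + 1) = π (hπ.wordFrom a i) := by
  rw [wordFrom_apply, wordFrom_apply, ← Perm.mul_apply, ← pow_succ',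
    hπ.pow_apply_eq_pow_apply_iff]
  simp [Nat.ModEq, Fin.val_add]

theorem cycleOfWord_wordFrom (hπ : IsCyclicPerm π) (a : Fin n) :
    cycleOfWord (hπ.wordFrom a) = π := by
  rw [cycleOfWord, mul_inv_eq_iff_eq_mul]
  ext1 i
  rw [Perm.mul_apply, Perm.mul_apply, finRotate_apply, hπ.wordFrom_add_one]

/-- A cyclic permutation with a chosen starting point is the same as the one-line notation read off
along its cycle. -/
noncomputable def pointedCyclicPermEquiv (n : ℕ) [NeZero n] :
    {p : Perm (Fin n) × Fin n // IsCyclicPerm p.1} ≃ Perm (Fin n) where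
  toFun p := p.2.wordFrom p.1.2
  invFun σ := ⟨(cycleOfWord σ, σ 0), isCyclicPerm_cycleOfWord σ⟩
  left_inv p :=
    Subtype.ext (Prod.ext (cycleOfWord_wordFrom p.2 p.1.2) (p.2.wordFrom_apply_zero p.1.2))
  right_inv := wordFrom_cycleOfWord

theorem card_pointed_cycleUpDownAt_eq_eulerE (n : ℕ) [NeZero n] :
    Nat.card {p : Perm (Fin n) × Fin n // IsCyclicPerm p.1 ∧ CycleUpDownAt p.1 p.2} =
      eulerE n :=
  Nat.card_congr <| (Equiv.subtypeSubtypeEquivSubtypeInter _ _).symm.trans <|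
    (pointedCyclicPermEquiv n).subtypeEquiv fun p =>
      (p.2.isUpDownPerm_wordFrom_iff p.1.2).symm

end CyclicPerm

/-- cyclic permutations of `[2k+1]` with a generalized up-down cycle. -/
theorem stmt6 (k : ℕ) :
    Nat.card {π : Equiv.Perm (Fin (2 * k + 1)) //
      IsCyclicPerm π ∧ ∃ a : Fin (2 * k + 1), CycleUpDownAt π a} =
      eulerE (2 * k + 1) := by
  rw [← card_pointed_cycleUpDownAt_eq_eulerE]
  symm
  refine Nat.card_eq_of_bijective
    (fun p => ⟨p.1.1, p.2.1, p.1.2, p.2.2⟩) ⟨?injective, ?surjective⟩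
  case injective =>
    rintro ⟨⟨π, a⟩, hπ, ha⟩ ⟨⟨π', b⟩, hπ', hb⟩ heq
    obtain rfl : π = π' := congrArg Subtype.val heq
    have hodd : Odd (cycLen π a) := by
      rw [hπ.cycLen_eq a]
      exact odd_two_mul_add_one k
    exact Subtype.ext (Prod.ext rfl (ha.eq_of_sameCycle hb (hπ a b) hodd))
  case surjective =>
    rintro ⟨π, hπ, a, ha⟩
    exact ⟨⟨(π, a), hπ, ha⟩, rfl⟩
end
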